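/- Let p, q be real numbers with q ≠ 0 and 0 ≤ p/q ≤ 1. Then for all nonzero x, y ∈ X, (p/q) · α_q[x,y] / max(‖x‖^(q−p), ‖y‖^(q−p)) ≤ α_p[x,y] ≤ ((2q − p)/q) · α_q[x,y] / max(‖x‖^(q−p), ‖y‖^(q−p)). -/

import Mathlib

/-- The `p`-angular distance `α_p[x,y] = ‖‖x‖^(p-1) • x - ‖y‖^(p-1) • y‖`. -/
noncomputable def alphaD {X : Type*} [NormedAddCommGroup X] [NormedSpace ℝ X]
    (p : ℝ) (x y : X) : ℝ :=
  ‖(‖x‖ ^ (p - 1)) • x - (‖y‖ ^ (p - 1)) • y‖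

/-! Write `φ_r z = ‖z‖^(r-1) • z`, so that `α_r[x,y] = ‖φ_r x - φ_r y‖` and `‖φ_r z‖ = ‖z‖^r`.
By symmetry let `‖x‖^(q-p)` be the maximum, and compare `u = φ_q x`, `v = φ_q y` with
`w = ‖x‖^(q-p) • φ_p y`: then `‖u - v‖ = α_q[x,y]` and `‖u - w‖ = ‖x‖^(q-p) α_p[x,y]`, and `w`
lies beyond `v` on the ray through `y`. With `t = p/q`, weighted AM-GM says
`‖w‖ ≤ t ‖v‖ + (1 - t) ‖u‖`, and the triangle inequality turns this into
`t ‖u - v‖ ≤ ‖u - w‖ ≤ (2 - t) ‖u - v‖`. -/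

section SeminormedAddCommGroup

variable {E : Type*} [SeminormedAddCommGroup E] {u v w : E} {t : ℝ}

theorem mul_norm_sub_le_norm_sub_of_norm_le (h0 : 0 ≤ t) (h1 : t ≤ 1)
    (hvw : ‖w - v‖ ≤ ‖w‖ - ‖v‖) (hw : ‖w‖ ≤ t * ‖v‖ + (1 - t) * ‖u‖) :
    t * ‖u - v‖ ≤ ‖u - w‖ :=
  calc
    t * ‖u - v‖ ≤ t * (‖u - w‖ + ‖w - v‖) := by
      gcongr
      exact norm_sub_le_norm_sub_add_norm_sub u w v
    _ ≤ t * (‖u - w‖ + (‖w‖ - ‖v‖)) := by gcongr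
    _ ≤ t * ‖u - w‖ + (1 - t) * (‖u‖ - ‖w‖) := by linarith
    _ ≤ t * ‖u - w‖ + (1 - t) * ‖u - w‖ := by
      gcongr
      exact norm_sub_norm_le u w
    _ = ‖u - w‖ := by ring

theorem norm_sub_le_two_sub_mul_norm_sub_of_norm_le (h1 : t ≤ 1)
    (hvw : ‖w - v‖ ≤ ‖w‖ - ‖v‖) (hw : ‖w‖ ≤ t * ‖v‖ + (1 - t) * ‖u‖) :
    ‖u - w‖ ≤ (2 - t) * ‖u - v‖ :=
  calc
    ‖u - w‖ ≤ ‖u - v‖ + ‖w - v‖ := by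
      rw [norm_sub_rev w v]
      exact norm_sub_le_norm_sub_add_norm_sub u v w
    _ ≤ ‖u - v‖ + (1 - t) * (‖u‖ - ‖v‖) := by linarith
    _ ≤ ‖u - v‖ + (1 - t) * ‖u - v‖ := by
      gcongr
      exact norm_sub_norm_le u v
    _ = (2 - t) * ‖u - v‖ := by ring

end SeminormedAddCommGroup

theorem rpow_sub_mul_rpow_le_weighted_add {a b p q : ℝ} (ha : 0 ≤ a) (hb : 0 ≤ b) (hq : q ≠ 0)
    (h0 : 0 ≤ p / q) (h1 : p / q ≤ 1) :
    a ^ (q - p) * b ^ p ≤ p / q * b ^ q + (1 - p / q) * a ^ q := by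
  have amgm := Real.geom_mean_le_arith_mean2_weighted h0 (sub_nonneg.2 h1)
    (Real.rpow_nonneg hb q) (Real.rpow_nonneg ha q) (add_sub_cancel _ _)
  rwa [← Real.rpow_mul hb, ← Real.rpow_mul ha, mul_one_sub, mul_div_cancel₀ p hq,
    mul_comm (b ^ p)] at amgm

section RadialPow

variable {E : Type*} [SeminormedAddCommGroup E] [NormedSpace ℝ E] {x y : E} {p q : ℝ}

/-- The radial power map `x ↦ ‖x‖^(p-1) • x`, which keeps directions and raises norms to the
power `p`. The `p`-angular distance of `x` and `y` is the distance of their images. -/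
noncomputable def radialPow (p : ℝ) (x : E) : E :=
  ‖x‖ ^ (p - 1) • x

theorem norm_radialPow (p : ℝ) (hx : ‖x‖ ≠ 0) : ‖radialPow p x‖ = ‖x‖ ^ p := by
  rw [radialPow, norm_smul, Real.norm_of_nonneg (by positivity), Real.rpow_sub_one hx,
    div_mul_cancel₀ _ hx]

theorem rpow_sub_smul_radialPow (p q : ℝ) (hx : ‖x‖ ≠ 0) :
    ‖x‖ ^ (q - p) • radialPow p x = radialPow q x := by
  rw [radialPow, radialPow, smul_smul, ← Real.rpow_add (by positivity), sub_add_sub_cancel]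

theorem norm_smul_radialPow_sub_radialPow {c : ℝ} (hy : ‖y‖ ≠ 0) (hc : ‖y‖ ^ (q - p) ≤ c) :
    ‖c • radialPow p y - radialPow q y‖ = ‖c • radialPow p y‖ - ‖radialPow q y‖ := by
  have hpow : 0 ≤ ‖y‖ ^ (q - p) := by positivity
  rw [← rpow_sub_smul_radialPow p q hy, ← sub_smul, norm_smul, norm_smul, norm_smul,
    Real.norm_of_nonneg (sub_nonneg.2 hc), Real.norm_of_nonneg hpow,
    Real.norm_of_nonneg (hpow.trans hc), sub_mul]

theorem norm_rpow_sub_smul_radialPow_le (hq : q ≠ 0) (h0 : 0 ≤ p / q) (h1 : p / q ≤ 1)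
    (hx : ‖x‖ ≠ 0) (hy : ‖y‖ ≠ 0) :
    ‖‖x‖ ^ (q - p) • radialPow p y‖ ≤
      p / q * ‖radialPow q y‖ + (1 - p / q) * ‖radialPow q x‖ := by
  rw [norm_smul, Real.norm_of_nonneg (by positivity), norm_radialPow p hy, norm_radialPow q hy,
    norm_radialPow q hx]
  exact rpow_sub_mul_rpow_le_weighted_add (norm_nonneg x) (norm_nonneg y) hq h0 h1

theorem norm_radialPow_sub_rpow_sub_smul_radialPow (p q : ℝ) (hx : ‖x‖ ≠ 0) (y : E) :
    ‖radialPow q x - ‖x‖ ^ (q - p) • radialPow p y‖ =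
      ‖radialPow p x - radialPow p y‖ * ‖x‖ ^ (q - p) := by
  rw [← rpow_sub_smul_radialPow p q hx, ← smul_sub, norm_smul,
    Real.norm_of_nonneg (by positivity), mul_comm]

end RadialPow

section AngularDistance

variable {X : Type*} [NormedAddCommGroup X] [NormedSpace ℝ X]

theorem alphaD_eq_norm_radialPow_sub (p : ℝ) (x y : X) :
    alphaD p x y = ‖radialPow p x - radialPow p y‖ :=
  rfl

theorem alphaD_comm (p : ℝ) (x y : X) : alphaD p x y = alphaD p y x :=
  norm_sub_rev _ _

end AngularDistance

theorem stmt_13 {X : Type*} [NormedAddCommGroup X] [NormedSpace ℝ X]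
    (p q : ℝ) (hq : q ≠ 0) (h0 : 0 ≤ p / q) (h1 : p / q ≤ 1)
    (x y : X) (hx : x ≠ 0) (hy : y ≠ 0) :
    (p / q) * (alphaD q x y / max (‖x‖ ^ (q - p)) (‖y‖ ^ (q - p)))
      ≤ alphaD p x y ∧
    alphaD p x y ≤
      ((2 * q - p) / q) * (alphaD q x y / max (‖x‖ ^ (q - p)) (‖y‖ ^ (q - p))) := by
  wlog hyx : ‖y‖ ^ (q - p) ≤ ‖x‖ ^ (q - p) generalizing x y
  · rw [alphaD_comm p, alphaD_comm q, max_comm]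
    exact this y x hy hx (le_of_not_ge hyx)
  have hx' : ‖x‖ ≠ 0 := norm_ne_zero_iff.2 hx
  have hy' : ‖y‖ ≠ 0 := norm_ne_zero_iff.2 hy
  have hpow : 0 < ‖x‖ ^ (q - p) := by positivity
  have ray := (norm_smul_radialPow_sub_radialPow hy' hyx).le
  have amgm := norm_rpow_sub_smul_radialPow_le hq h0 h1 hx' hy'
  rw [max_eq_left hyx, sub_div, mul_div_cancel_right₀ 2 hq, ← mul_div_assoc, ← mul_div_assoc,
    div_le_iff₀ hpow, le_div_iff₀ hpow]
  simp only [alphaD_eq_norm_radialPow_sub]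
  rw [← norm_radialPow_sub_rpow_sub_smul_radialPow p q hx' y]
  exact ⟨mul_norm_sub_le_norm_sub_of_norm_le h0 h1 ray amgm,
    norm_sub_le_two_sub_mul_norm_sub_of_norm_le h1 ray amgm⟩
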